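/- arXiv:1306.0381 — 2 statements merged into one kernel-verified Lean document; each statement's English description precedes it below -/
import Mathlib

section
/- Let θ > 0 and β > 0 satisfy θ < 2^{−β}, let R₀ > 0 and C > 0, and let L : (R₀, ∞) → ℝ be a nonnegative, nondecreasing function. Suppose that L(R) ≤ θ L(2R) + g(R) for all R > R₀ and L(R) ≤ C R^β for all R > R₀, where g : (R₀, ∞) → [0, ∞) satisfies g(R) → 0 as R → +∞. Then L(R) = 0 for every R > R₀. -/
open Real Filter

/-!
Put `q = θ * 2 ^ β < 1` and fix `ε > 0`. Once `g ≤ ε * (1 - θ)` beyond some radius, iterating the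
recursive inequality `n` times and inserting the growth bound gives `L S ≤ C * S ^ β * q ^ n + ε`
for all large `S`. Letting `n → ∞` gives `L S ≤ ε`, and monotonicity carries this bound
down to every `R > R₀`.
-/

/-- The iteration lemma: a nonnegative nondecreasing function `L` on `(R₀, ∞)` with
`L(R) ≤ θ L(2R) + g(R)`, `θ < 2^{-β}`, polynomial growth `L(R) ≤ C R^β` and `g → 0`
at infinity must vanish identically. -/
theorem iteration_lemma_vanishing
    (θ β R₀ C : ℝ) (hθ : 0 < θ) (hβ : 0 < β) (hθβ : θ < 2 ^ (-β))
    (hR₀ : 0 < R₀) (hC : 0 < C)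
    (L g : ℝ → ℝ)
    (hLnonneg : ∀ R : ℝ, R₀ < R → 0 ≤ L R)
    (hLmono : ∀ R₁ R₂ : ℝ, R₀ < R₁ → R₁ ≤ R₂ → L R₁ ≤ L R₂)
    (hrec : ∀ R : ℝ, R₀ < R → L R ≤ θ * L (2 * R) + g R)
    (hgrowth : ∀ R : ℝ, R₀ < R → L R ≤ C * R ^ β)
    (hgnonneg : ∀ R : ℝ, R₀ < R → 0 ≤ g R)
    (hglim : Tendsto g atTop (nhds 0)) :
    ∀ R : ℝ, R₀ < R → L R = 0 := by
  have hθ1 : θ < 1 := hθβ.trans (Real.rpow_lt_one_of_one_lt_of_neg one_lt_two (neg_lt_zero.2 hβ))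
  have h2 : (0 : ℝ) < 2 ^ β := Real.rpow_pos_of_pos two_pos β
  have hq0 : 0 ≤ θ * 2 ^ β := by positivity
  have hq1 : θ * 2 ^ β < 1 := by
    rw [Real.rpow_neg two_pos.le] at hθβ
    calc θ * 2 ^ β < (2 ^ β)⁻¹ * 2 ^ β := mul_lt_mul_of_pos_right hθβ h2
      _ = 1 := inv_mul_cancel₀ h2.ne'
  intro R hR
  refine le_antisymm (le_of_forall_pos_le_add fun ε hε => ?_) (hLnonneg R hR)
  rw [zero_add]
  have hδ : 0 < ε * (1 - θ) := mul_pos hε (sub_pos.2 hθ1)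
  obtain ⟨M, hM⟩ := eventually_atTop.1 (hglim.eventually (eventually_le_nhds hδ))
  -- `S` is arbitrary in the induction because the step passes from `S` to `2 * S`.
  have key : ∀ n : ℕ, ∀ S : ℝ, R₀ < S → M ≤ S → L S ≤ C * S ^ β * (θ * 2 ^ β) ^ n + ε := by
    intro n
    induction n with
    | zero =>
      intro S hS _
      have := hgrowth S hS
      rw [pow_zero, mul_one]
      linarith
    | succ n ih =>
      intro S hS hMS
      have hS0 : 0 < S := hR₀.trans hS
      have h := ih (2 * S) (by linarith) (by linarith)
      rw [Real.mul_rpow two_pos.le hS0.le] at h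
      calc L S ≤ θ * L (2 * S) + g S := hrec S hS
        _ ≤ θ * (C * (2 ^ β * S ^ β) * (θ * 2 ^ β) ^ n + ε) + ε * (1 - θ) :=
            add_le_add (mul_le_mul_of_nonneg_left h hθ.le) (hM S hMS)
        _ = C * S ^ β * (θ * 2 ^ β) ^ (n + 1) + ε := by ring
  have hlim : Tendsto (fun n : ℕ => C * (max R M) ^ β * (θ * 2 ^ β) ^ n + ε) atTop (nhds ε) := by
    simpa using ((tendsto_pow_atTop_nhds_zero_of_lt_one hq0 hq1).const_mul
      (C * (max R M) ^ β)).add_const ε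
  exact (hLmono R (max R M) hR (le_max_left _ _)).trans (ge_of_tendsto' hlim fun n =>
    key n _ (hR.trans_le (le_max_left _ _)) (le_max_right _ _))
end

section
/- Let I be an open bounded subset of ℝ and suppose I = A ∪ B, where A and B are measurable subsets of I whose intersection has Lebesgue measure zero. Let ρ : I → (0, ∞] be measurable with inf_{t ∈ I} ρ(t) > 0. Let w : ℝ → ℝ be continuously differentiable with compact support contained in I, and assume ∫_I ρ(t) |w'(t)|² dt < ∞. Then ∫_I w(t)² dt ≤ 2|I| · max{ |A| · sup_{t ∈ A} 1/ρ(t), |B| · sup_{t ∈ B} 1/ρ(t) } · ∫_I ρ(t) |w'(t)|² dt. -/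
open MeasureTheory Real Set ENNReal

/-!
A compactly supported `w` satisfies `|w x| ≤ ∫_I |w'|` for every `x`, because `w'` vanishes off `I`.
Splitting the integral along `I = A ∪ B` and using `(a + b)² ≤ 2 (a² + b²)`, it remains to bound
`(∫_S |w'|)²` for `S = A, B`: Cauchy–Schwarz and `1 ≤ (sup_S 1/ρ) ρ` give the bound
`|S| (sup_S 1/ρ) ∫_S ρ |w'|²` (`sq_lintegral_le_of_weight`). As `A ∩ B` is null, the two weighted
energies add up to the one over `I`. Integrating the resulting uniform bound on `w²` over `I`
produces the factor `|I|`.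
-/

lemma ennreal_add_sq_le (a b : ℝ≥0∞) : (a + b) ^ 2 ≤ 2 * (a ^ 2 + b ^ 2) := by
  rcases eq_or_ne a ⊤ with rfl | ha
  · simp
  rcases eq_or_ne b ⊤ with rfl | hb
  · simp
  lift a to NNReal using ha
  lift b to NNReal using hb
  exact_mod_cast add_sq_le (a := a) (b := b)

/-- Cauchy–Schwarz against the constant function `1`. -/
lemma sq_setLIntegral_le (S : Set ℝ) (f : ℝ → ℝ≥0∞) (hf : Measurable f) :
    (∫⁻ t in S, f t) ^ 2 ≤ volume S * ∫⁻ t in S, f t ^ 2 := by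
  have h := ENNReal.lintegral_mul_le_Lp_mul_Lq (volume.restrict S) Real.HolderConjugate.two_two
    (f := fun _ => 1) (g := f) aemeasurable_const hf.aemeasurable
  simp only [Pi.mul_apply, one_mul, lintegral_const, Measure.restrict_apply_univ,
    ENNReal.rpow_two, one_pow] at h
  have h2 := pow_le_pow_left' h 2
  have key (x : ℝ≥0∞) : (x ^ (1 / 2 : ℝ)) ^ 2 = x := by
    rw [← ENNReal.rpow_two, ← ENNReal.rpow_mul]; norm_num
  rwa [mul_pow, key, key] at h2

/-- Weighted Cauchy–Schwarz. Where `ρ = ⊤`, finiteness of the energy density forces `f = 0`. -/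
lemma sq_lintegral_le_of_weight (S : Set ℝ) (hS : MeasurableSet S) (f ρ : ℝ → ℝ≥0∞)
    (hf : Measurable f) (hρ0 : ∀ t ∈ S, ρ t ≠ 0)
    (hfin : ∀ᵐ t ∂volume.restrict S, ρ t * f t ^ 2 < ⊤) (hρ : Measurable ρ) :
    (∫⁻ t in S, f t) ^ 2 ≤
      volume S * (⨆ t ∈ S, (ρ t)⁻¹) * ∫⁻ t in S, ρ t * f t ^ 2 := by
  refine (sq_setLIntegral_le S f hf).trans ?_
  have hm : Measurable fun t => ρ t * f t ^ 2 := hρ.mul (hf.pow_const 2)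
  rw [mul_assoc, ← lintegral_const_mul _ hm]
  refine mul_le_mul_right (lintegral_mono_ae ?_) _
  filter_upwards [hfin, ae_restrict_mem hS] with t ht htS
  by_cases hT : ρ t = ⊤
  · have : f t = 0 := by
      by_contra h0
      rw [hT, ENNReal.top_mul (pow_ne_zero 2 h0)] at ht
      exact lt_irrefl _ ht
    simp [this]
  · calc f t ^ 2 = (ρ t)⁻¹ * (ρ t * f t ^ 2) := by
          rw [← mul_assoc, ENNReal.inv_mul_cancel (hρ0 t htS) hT, one_mul]
      _ ≤ _ := by
          gcongr
          exact le_iSup₂ (f := fun t (_ : t ∈ S) => (ρ t)⁻¹) t htS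

/-- Generalized one-dimensional Poincaré inequality on a decomposition `I = A ∪ B`,
with an extended-real-valued weight `ρ` bounded away from zero (the convention
`1/∞ = 0` being built into `ℝ≥0∞`). -/
theorem poincare_type_inequality_one_dim
    (I A B : Set ℝ) (hI : IsOpen I) (hIbd : Bornology.IsBounded I)
    (hAI : A ⊆ I) (hBI : B ⊆ I) (hAB : I = A ∪ B)
    (hAmeas : MeasurableSet A) (hBmeas : MeasurableSet B)
    (hABnull : volume (A ∩ B) = 0)
    (ρ : ℝ → ℝ≥0∞) (hρmeas : Measurable ρ)
    (hρinf : 0 < ⨅ t ∈ I, ρ t)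
    (w : ℝ → ℝ) (hw : ContDiff ℝ 1 w) (hwsupp : HasCompactSupport w)
    (hwsuppI : tsupport w ⊆ I)
    (hfin : ∫⁻ t in I, ρ t * ENNReal.ofReal ((deriv w t) ^ 2) ≠ ⊤) :
    ∫⁻ t in I, ENNReal.ofReal ((w t) ^ 2) ≤
      2 * volume I *
        max (volume A * ⨆ t ∈ A, (ρ t)⁻¹) (volume B * ⨆ t ∈ B, (ρ t)⁻¹) *
        ∫⁻ t in I, ρ t * ENNReal.ofReal ((deriv w t) ^ 2) := by
  have hsq (x : ℝ) : ENNReal.ofReal (x ^ 2) = ‖x‖ₑ ^ 2 := by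
    rw [← Real.enorm_of_nonneg (sq_nonneg x), enorm_pow]
  simp only [hsq] at hfin ⊢
  have hdm : Measurable (fun t => ‖deriv w t‖ₑ) := (measurable_deriv w).enorm
  have hEm : Measurable (fun t => ρ t * ‖deriv w t‖ₑ ^ 2) := hρmeas.mul (hdm.pow_const 2)
  have hρ0 : ∀ t ∈ I, ρ t ≠ 0 := fun t ht =>
    (hρinf.trans_le (iInf₂_le (f := fun t (_ : t ∈ I) => ρ t) t ht)).ne'
  have hae : ∀ᵐ t ∂volume.restrict I, ρ t * ‖deriv w t‖ₑ ^ 2 < ⊤ := ae_lt_top hEm hfin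
  have hA := sq_lintegral_le_of_weight A hAmeas _ ρ hdm (fun t ht => hρ0 t (hAI ht))
    (ae_restrict_of_ae_restrict_of_subset hAI hae) hρmeas
  have hB := sq_lintegral_le_of_weight B hBmeas _ ρ hdm (fun t ht => hρ0 t (hBI ht))
    (ae_restrict_of_ae_restrict_of_subset hBI hae) hρmeas
  have hsum : ∫⁻ t in I, ρ t * ‖deriv w t‖ₑ ^ 2 =
      (∫⁻ t in A, ρ t * ‖deriv w t‖ₑ ^ 2) + ∫⁻ t in B, ρ t * ‖deriv w t‖ₑ ^ 2 := by
    have hd : AEDisjoint volume A B := hABnull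
    rw [hAB, Measure.restrict_union₀ hd hBmeas.nullMeasurableSet, lintegral_add_measure]
  have hsupp : Function.support (fun t => ‖deriv w t‖ₑ) ⊆ I := fun t ht =>
    hwsuppI (support_deriv_subset (by simpa using ht))
  have hpt (x : ℝ) : ‖w x‖ₑ ≤ (∫⁻ t in A, ‖deriv w t‖ₑ) + ∫⁻ t in B, ‖deriv w t‖ₑ :=
    calc ‖w x‖ₑ ≤ ∫⁻ t in Iic x, ‖deriv w t‖ₑ := hwsupp.enorm_le_lintegral_Ici_deriv hw x
      _ ≤ ∫⁻ t, ‖deriv w t‖ₑ := setLIntegral_le_lintegral _ _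
      _ = ∫⁻ t in I, ‖deriv w t‖ₑ := (setLIntegral_eq_of_support_subset hsupp).symm
      _ ≤ _ := by rw [hAB]; exact lintegral_union_le _ _ _
  set M := max (volume A * ⨆ t ∈ A, (ρ t)⁻¹) (volume B * ⨆ t ∈ B, (ρ t)⁻¹) with hM
  have hpt2 (x : ℝ) : ‖w x‖ₑ ^ 2 ≤ 2 * (M * ∫⁻ t in I, ρ t * ‖deriv w t‖ₑ ^ 2) := by
    refine (pow_le_pow_left' (hpt x) 2).trans ((ennreal_add_sq_le _ _).trans ?_)
    rw [hsum, mul_add M]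
    exact mul_le_mul_right (add_le_add
      (hA.trans (mul_le_mul_left (le_max_left _ _) _))
      (hB.trans (mul_le_mul_left (le_max_right _ _) _))) _
  calc ∫⁻ t in I, ‖w t‖ₑ ^ 2
      ≤ ∫⁻ _ in I, 2 * (M * ∫⁻ t in I, ρ t * ‖deriv w t‖ₑ ^ 2) := lintegral_mono hpt2
    _ = _ := by rw [setLIntegral_const]; ring
end
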